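/- arXiv:1905.07034 — 9 statements merged into one kernel-verified Lean document; each statement's English description precedes it below -/
import Mathlib

section
/- Let β ∈ ℝ with β ≠ 0 and β ≠ 1, and let μ₁ > 0 be fixed. Then the function μ₂ ↦ D^d_β(μ₂‖μ₁) is strictly convex on the interval (0,∞). (In contrast to β-divergence in its second argument, this convexity holds for every admissible β ∈ ℝ.) -/
/-- Generalized dual Kullback–Leibler divergence `D^d_β(μ₂‖μ₁)`. -/
noncomputable def dualDiv (β μ₁ μ₂ : ℝ) : ℝ :=
  (μ₂ ^ β - β * μ₂ * μ₁ ^ (β - 1) + (β - 1) * μ₁ ^ β) / (β * (β - 1))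

/-!
As a function of `μ₂`, the divergence differs from `μ₂ ^ β / (β * (β - 1))` by an affine function.
That power has derivative `μ₂ ^ (β - 1) / (β - 1)`, which is strictly increasing on `(0, ∞)`
whatever the sign of `β - 1`: the denominator compensates for the monotonicity of the power.
-/

theorem strictMonoOn_rpow_div {p : ℝ} (hp : p ≠ 0) :
    StrictMonoOn (fun x : ℝ => x ^ p / p) (Set.Ioi 0) := by
  intro x hx y _ hxy
  rcases hp.lt_or_gt with hneg | hpos
  · exact div_lt_div_of_neg_of_lt hneg (Real.rpow_lt_rpow_of_neg hx hxy hneg)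
  · exact div_lt_div_of_pos_right (Real.rpow_lt_rpow hx.le hxy hpos) hpos

theorem hasDerivAt_rpow_div {p x : ℝ} (hp : p ≠ 0) (hx : x ≠ 0) :
    HasDerivAt (fun y : ℝ => y ^ p / p) (x ^ (p - 1)) x := by
  simpa only [mul_div_cancel_left₀ _ hp] using
    (Real.hasDerivAt_rpow_const (p := p) (Or.inl hx)).div_const p

theorem strictConvexOn_rpow_div {p : ℝ} (hp₀ : p ≠ 0) (hp₁ : p ≠ 1) :
    StrictConvexOn ℝ (Set.Ioi 0) (fun x : ℝ => x ^ p / (p * (p - 1))) := by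
  have hderiv : ∀ x ∈ Set.Ioi (0 : ℝ),
      HasDerivAt (fun y : ℝ => y ^ p / (p * (p - 1))) (x ^ (p - 1) / (p - 1)) x := by
    intro x hx
    simpa only [div_div] using (hasDerivAt_rpow_div hp₀ (ne_of_gt hx)).div_const (p - 1)
  refine StrictMonoOn.strictConvexOn_of_deriv (convex_Ioi 0)
    (fun x hx => (hderiv x hx).continuousAt.continuousWithinAt) ?_
  rw [interior_Ioi]
  exact (strictMonoOn_rpow_div (sub_ne_zero.mpr hp₁)).congr fun x hx => (hderiv x hx).deriv.symm

theorem convexOn_mul_add_const (a b : ℝ) {s : Set ℝ} (hs : Convex ℝ s) :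
    ConvexOn ℝ s (fun x => a * x + b) :=
  ((LinearMap.mulLeft ℝ a).convexOn hs).add_const b

theorem dualDiv_eq_rpow_div_add {β : ℝ} (hβ₀ : β ≠ 0) (hβ₁ : β ≠ 1) (μ₁ μ₂ : ℝ) :
    dualDiv β μ₁ μ₂ =
      μ₂ ^ β / (β * (β - 1)) + (-(μ₁ ^ (β - 1) / (β - 1)) * μ₂ + μ₁ ^ β / β) := by
  have hβ : β - 1 ≠ 0 := sub_ne_zero.mpr hβ₁
  rw [dualDiv]
  field_simp
  ring

theorem dualDiv_strictConvexOn (β μ₁ : ℝ) (hβ0 : β ≠ 0) (hβ1 : β ≠ 1) (hμ₁ : 0 < μ₁) :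
    StrictConvexOn ℝ (Set.Ioi (0 : ℝ)) (fun μ₂ : ℝ => dualDiv β μ₁ μ₂) := by
  simp only [dualDiv_eq_rpow_div_add hβ0 hβ1]
  exact (strictConvexOn_rpow_div hβ0 hβ1).add_convexOn
    (convexOn_mul_add_const _ _ (convex_Ioi 0))
end

section
/- Let μ₁, μ₂ > 0. Then the limit as β → 1 (over β ∉ {0,1}) of D^d_β(μ₂‖μ₁) exists and equals μ₂ · log(μ₂/μ₁) − μ₂ + μ₁ (the dual Kullback–Leibler divergence of the Poisson model). -/
/-!
Writing the numerator of `dualDiv β μ₁ μ₂` as `μ₂ * (μ₂ ^ h - μ₁ ^ h) - h * μ₁ ^ h * (μ₂ - μ₁)`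
with `h = β - 1` isolates the singularity at `β = 1` in the difference quotient at `0` of
`h ↦ μ₂ ^ h - μ₁ ^ h`, whose derivative there is `log (μ₂ / μ₁)`.
-/

open Filter Topology

theorem tendsto_rpow_sub_rpow_div_nhdsNE_zero {a b : ℝ} (ha : 0 < a) (hb : 0 < b) :
    Tendsto (fun h : ℝ => (a ^ h - b ^ h) / h) (𝓝[≠] 0) (𝓝 (Real.log (a / b))) := by
  have hderiv : HasDerivAt (fun h : ℝ => a ^ h - b ^ h) (Real.log (a / b)) 0 := by
    refine ((Real.hasStrictDerivAt_const_rpow ha 0).hasDerivAt.sub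
      (Real.hasStrictDerivAt_const_rpow hb 0).hasDerivAt).congr_deriv ?_
    simp only [Real.rpow_zero, one_mul, Real.log_div ha.ne' hb.ne']
  simpa [div_eq_inv_mul] using hderiv.tendsto_slope_zero

theorem dualDiv_eq_of_ne_one {β μ₁ μ₂ : ℝ} (hβ : β ≠ 1) (hμ₁ : μ₁ ≠ 0) (hμ₂ : μ₂ ≠ 0) :
    dualDiv β μ₁ μ₂ =
      (μ₂ * ((μ₂ ^ (β - 1) - μ₁ ^ (β - 1)) / (β - 1)) - μ₁ ^ (β - 1) * (μ₂ - μ₁)) / β := by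
  have hβ' : β - 1 ≠ 0 := sub_ne_zero.mpr hβ
  rw [dualDiv, mul_comm β (β - 1), ← div_div, Real.rpow_sub_one hμ₁, Real.rpow_sub_one hμ₂]
  congr 1
  field_simp
  ring

theorem dualDiv_tendsto_one (μ₁ μ₂ : ℝ) (hμ₁ : 0 < μ₁) (hμ₂ : 0 < μ₂) :
    Filter.Tendsto (fun β : ℝ => dualDiv β μ₁ μ₂)
      (nhdsWithin 1 ({0, 1} : Set ℝ)ᶜ)
      (nhds (μ₂ * Real.log (μ₂ / μ₁) - μ₂ + μ₁)) := by
  have hle : 𝓝[({0, 1} : Set ℝ)ᶜ] 1 ≤ 𝓝[≠] 1 := nhdsWithin_mono 1 (by simp)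
  have hβ : Tendsto (fun β : ℝ => β) (𝓝[≠] 1) (𝓝 1) := tendsto_id.mono_left nhdsWithin_le_nhds
  have hsub : Tendsto (fun β : ℝ => β - 1) (𝓝[≠] 1) (𝓝[≠] 0) := by
    refine tendsto_nhdsWithin_iff.mpr ⟨by simpa using hβ.sub_const 1, ?_⟩
    filter_upwards [self_mem_nhdsWithin] with β hβ_ne using sub_ne_zero.mpr hβ_ne
  have hquot : Tendsto (fun β : ℝ => (μ₂ ^ (β - 1) - μ₁ ^ (β - 1)) / (β - 1)) (𝓝[≠] 1)
      (𝓝 (Real.log (μ₂ / μ₁))) :=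
    (tendsto_rpow_sub_rpow_div_nhdsNE_zero hμ₂ hμ₁).comp hsub
  have hpow : Tendsto (fun β : ℝ => μ₁ ^ (β - 1)) (𝓝[≠] 1) (𝓝 1) := by
    simpa using tendsto_const_nhds.rpow (hβ.sub_const 1) (.inl hμ₁.ne')
  have hlim := ((hquot.const_mul μ₂).sub (hpow.mul_const (μ₂ - μ₁))).div hβ one_ne_zero
  rw [div_one, one_mul, ← sub_add] at hlim
  refine (hlim.congr' ?_).mono_left hle
  filter_upwards [self_mem_nhdsWithin] with β hβ_ne
  exact (dualDiv_eq_of_ne_one hβ_ne hμ₁.ne' hμ₂.ne').symm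
end

section
/- Let μ₁, μ₂ > 0. Then the limit as β → 0 (over β ∉ {0,1}) of D^d_β(μ₂‖μ₁) exists and equals −log(μ₂/μ₁) + μ₂/μ₁ − 1 (the dual version of the Itakura–Saito divergence, i.e., the dual Kullback–Leibler divergence of the gamma model). -/
open Filter Topology

/-!
The divergence is homogeneous of degree `β`, so with `t = μ₂ / μ₁` it equals
`μ₁ ^ β * dualDiv β 1 t`, and the first factor tends to `1`. The second factor is
`((t ^ β - 1) / β - (t - 1)) / (β - 1)`, where the inner quotient is the difference quotient
at `0` of `β ↦ t ^ β` and so tends to `log t`.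
-/

theorem tendsto_rpow_sub_one_div_nhdsNE_zero {x : ℝ} (hx : 0 < x) :
    Tendsto (fun β : ℝ => (x ^ β - 1) / β) (𝓝[≠] 0) (𝓝 (Real.log x)) := by
  have hderiv : HasDerivAt (fun β : ℝ => x ^ β) (Real.log x) 0 := by
    simpa using (Real.hasStrictDerivAt_const_rpow hx 0).hasDerivAt
  simpa [div_eq_inv_mul] using hderiv.tendsto_slope_zero

theorem dualDiv_mul_mul {c x y : ℝ} (hc : 0 < c) (hx : 0 ≤ x) (hy : 0 ≤ y) (β : ℝ) :
    dualDiv β (c * x) (c * y) = c ^ β * dualDiv β x y := by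
  have hpow : c ^ β = c * c ^ (β - 1) := by
    rw [Real.rpow_sub_one hc.ne', mul_div_cancel₀ _ hc.ne']
  simp only [dualDiv, Real.mul_rpow hc.le hx, Real.mul_rpow hc.le hy, hpow]
  ring

theorem dualDiv_one_left {β : ℝ} (hβ : β ≠ 0) (t : ℝ) :
    dualDiv β 1 t = ((t ^ β - 1) / β - (t - 1)) / (β - 1) := by
  rw [dualDiv, ← div_div]
  congr 1
  simp only [Real.one_rpow]
  field_simp
  ring

theorem tendsto_dualDiv_one_left_nhdsNE_zero {t : ℝ} (ht : 0 < t) :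
    Tendsto (fun β : ℝ => dualDiv β 1 t) (𝓝[≠] 0) (𝓝 (-Real.log t + t - 1)) := by
  have hnum : Tendsto (fun β : ℝ => (t ^ β - 1) / β - (t - 1)) (𝓝[≠] 0)
      (𝓝 (Real.log t - (t - 1))) :=
    (tendsto_rpow_sub_one_div_nhdsNE_zero ht).sub_const (t - 1)
  have hden : Tendsto (fun β : ℝ => β - 1) (𝓝[≠] 0) (𝓝 (0 - 1)) :=
    (tendsto_id.sub_const 1).mono_left nhdsWithin_le_nhds
  have hlimit : (Real.log t - (t - 1)) / (0 - 1) = -Real.log t + t - 1 := by ring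
  rw [← hlimit]
  refine (hnum.div hden (by norm_num)).congr' ?_
  filter_upwards [self_mem_nhdsWithin] with β hβ
  exact (dualDiv_one_left hβ t).symm

theorem dualDiv_tendsto_zero (μ₁ μ₂ : ℝ) (hμ₁ : 0 < μ₁) (hμ₂ : 0 < μ₂) :
    Filter.Tendsto (fun β : ℝ => dualDiv β μ₁ μ₂)
      (nhdsWithin 0 ({0, 1} : Set ℝ)ᶜ)
      (nhds (-Real.log (μ₂ / μ₁) + μ₂ / μ₁ - 1)) := by
  have hratio : 0 < μ₂ / μ₁ := div_pos hμ₂ hμ₁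
  have hhomog (β : ℝ) : μ₁ ^ β * dualDiv β 1 (μ₂ / μ₁) = dualDiv β μ₁ μ₂ := by
    rw [← dualDiv_mul_mul hμ₁ zero_le_one hratio.le, mul_one, mul_div_cancel₀ _ hμ₁.ne']
  have hscale : Tendsto (fun β : ℝ => μ₁ ^ β) (𝓝[≠] 0) (𝓝 1) := by
    simpa using (Real.continuousAt_const_rpow hμ₁.ne' (b := 0)).tendsto.mono_left
      nhdsWithin_le_nhds
  have hpunctured : ({0, 1} : Set ℝ)ᶜ ⊆ {0}ᶜ :=
    Set.compl_subset_compl.2 (Set.singleton_subset_iff.2 (Set.mem_insert 0 {1}))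
  have hlimit := hscale.mul (tendsto_dualDiv_one_left_nhdsNE_zero hratio)
  simp only [hhomog, one_mul] at hlimit
  exact hlimit.mono_left (nhdsWithin_mono 0 hpunctured)
end

section
/- Let α ∈ ℝ with α < 1 or α > 2, let p, k ≥ 1, fix a column index j, and let V_{ij} > 0 (i = 1…p), W_{ia} > 0 (i = 1…p, a = 1…k), H^t_{aj} > 0 (a = 1…k) be given. Define F(H) = Σ_i [ (Σ_a W_{ia} H_{aj})^{2−α} − (2−α) V_{ij}^{1−α} (Σ_a W_{ia} H_{aj}) + (1−α) V_{ij}^{2−α} ] for H ∈ (0,∞)^k, and define G(H, H^t) = Σ_i [ −(2−α) V_{ij}^{1−α} (Σ_a W_{ia} H_{aj}) + (1−α) V_{ij}^{2−α} ] + Σ_{i,a} (W_{ia} H_{aj})^{2−α} (W_{ia} H^t_{aj} / Σ_b W_{ib} H^t_{bj})^{α−1}. Then G(H, H^t) ≥ F(H) for all H ∈ (0,∞)^k, and G(H, H) = F(H). -/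
/-!
With `q = 2 - α`, the function `x ↦ x ^ q` is convex on `(0, ∞)`. The terms of `F` and `G` involving
`V` agree, so it suffices to compare, for each row `i`, the power `(∑ a, W i a * H a) ^ q` with its
majorant. Jensen's inequality with weights `l a = W i a * Ht a / ∑ b, W i b * Ht b` at the points
`W i a * H a / l a` gives the bound; these points all coincide when `Ht = H`.
-/

open Finset

theorem convexOn_exp_comp {E : Type*} [AddCommMonoid E] [SMul ℝ E] {S : Set E} {f : E → ℝ}
    (hf : ConvexOn ℝ S f) : ConvexOn ℝ S fun x => Real.exp (f x) :=
  ⟨hf.1, fun _ hx _ hy _ _ ha hb hab =>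
    (Real.exp_le_exp.mpr (hf.2 hx hy ha hb hab)).trans
      (convexOn_exp.2 (Set.mem_univ _) (Set.mem_univ _) ha hb hab)⟩

theorem convexOn_rpow_Ioi_of_nonpos {q : ℝ} (hq : q ≤ 0) :
    ConvexOn ℝ (Set.Ioi 0) fun x : ℝ => x ^ q := by
  have hlog : ConvexOn ℝ (Set.Ioi 0) fun x : ℝ => -q * -Real.log x :=
    strictConcaveOn_log_Ioi.concaveOn.neg.smul (neg_nonneg.mpr hq)
  refine (convexOn_exp_comp hlog).congr fun x (hx : 0 < x) => ?_
  simp only [neg_mul_neg, mul_comm q, Real.rpow_def_of_pos hx]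

theorem convexOn_rpow_Ioi {q : ℝ} (hq : q ≤ 0 ∨ 1 ≤ q) :
    ConvexOn ℝ (Set.Ioi 0) fun x : ℝ => x ^ q :=
  hq.elim convexOn_rpow_Ioi_of_nonpos fun h =>
    (convexOn_rpow h).subset Set.Ioi_subset_Ici_self (convex_Ioi 0)

section WeightedPowerSums

variable {κ : Type*} {s : Finset κ} {x y w : κ → ℝ} {q : ℝ}

theorem rpow_sum_le_sum_rpow_mul_weight (hq : q ≤ 0 ∨ 1 ≤ q) (hx : ∀ a ∈ s, 0 < x a)
    (hw : ∀ a ∈ s, 0 < w a) (hw_sum : ∑ a ∈ s, w a = 1) :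
    (∑ a ∈ s, x a) ^ q ≤ ∑ a ∈ s, x a ^ q * w a ^ (1 - q) :=
  calc (∑ a ∈ s, x a) ^ q
      = (∑ a ∈ s, w a • (x a / w a)) ^ q := by
        congr 1
        exact sum_congr rfl fun a ha => (mul_div_cancel₀ _ (hw a ha).ne').symm
    _ ≤ ∑ a ∈ s, w a • (x a / w a) ^ q :=
        (convexOn_rpow_Ioi hq).map_sum_le (fun a ha => (hw a ha).le) hw_sum
          fun a ha => div_pos (hx a ha) (hw a ha)
    _ = ∑ a ∈ s, x a ^ q * w a ^ (1 - q) := by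
        refine sum_congr rfl fun a ha => ?_
        rw [smul_eq_mul, Real.div_rpow (hx a ha).le (hw a ha).le, Real.rpow_sub (hw a ha),
          Real.rpow_one]
        ring

theorem rpow_sum_le_sum_rpow_mul_share (hq : q ≤ 0 ∨ 1 ≤ q) (hs : s.Nonempty)
    (hx : ∀ a ∈ s, 0 < x a) (hy : ∀ a ∈ s, 0 < y a) :
    (∑ a ∈ s, x a) ^ q ≤ ∑ a ∈ s, x a ^ q * (y a / ∑ b ∈ s, y b) ^ (1 - q) := by
  have hy_sum : 0 < ∑ b ∈ s, y b := sum_pos hy hs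
  refine rpow_sum_le_sum_rpow_mul_weight hq hx (fun a ha => div_pos (hy a ha) hy_sum) ?_
  rw [← sum_div, div_self hy_sum.ne']

theorem sum_rpow_mul_share_self (q : ℝ) (hs : s.Nonempty) (hx : ∀ a ∈ s, 0 < x a) :
    ∑ a ∈ s, x a ^ q * (x a / ∑ b ∈ s, x b) ^ (1 - q) = (∑ a ∈ s, x a) ^ q := by
  have hx_sum : 0 < ∑ b ∈ s, x b := sum_pos hx hs
  have hterm : ∀ a ∈ s, x a ^ q * (x a / ∑ b ∈ s, x b) ^ (1 - q)
      = x a / (∑ b ∈ s, x b) ^ (1 - q) := fun a ha => by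
    rw [Real.div_rpow (hx a ha).le hx_sum.le, ← mul_div_assoc, ← Real.rpow_add (hx a ha),
      add_sub_cancel, Real.rpow_one]
  rw [sum_congr rfl hterm, ← sum_div, Real.rpow_sub hx_sum, Real.rpow_one,
    div_div_cancel₀ hx_sum.ne']

end WeightedPowerSums

/-- `G` is an auxiliary function for the per-column objective `F` in NMF based on
generalized dual Kullback–Leibler divergence, for `α < 1` or `α > 2`. -/
theorem auxiliary_function_for_dualKL (α : ℝ) (hα : α < 1 ∨ 2 < α) (p k : ℕ)
    (hp : 1 ≤ p) (hk : 1 ≤ k)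
    (V : Fin p → ℝ) (W : Fin p → Fin k → ℝ) (Ht : Fin k → ℝ)
    (hV : ∀ i, 0 < V i) (hW : ∀ i a, 0 < W i a) (hHt : ∀ a, 0 < Ht a) :
    let F : (Fin k → ℝ) → ℝ := fun H => ∑ i,
      ((∑ a, W i a * H a) ^ (2 - α) - (2 - α) * V i ^ (1 - α) * (∑ a, W i a * H a)
        + (1 - α) * V i ^ (2 - α))
    let G : (Fin k → ℝ) → (Fin k → ℝ) → ℝ := fun H H' =>
      (∑ i, (-(2 - α) * V i ^ (1 - α) * (∑ a, W i a * H a) + (1 - α) * V i ^ (2 - α)))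
        + ∑ i, ∑ a, (W i a * H a) ^ (2 - α) * (W i a * H' a / ∑ b, W i b * H' b) ^ (α - 1)
    (∀ H : Fin k → ℝ, (∀ a, 0 < H a) → F H ≤ G H Ht) ∧
      (∀ H : Fin k → ℝ, (∀ a, 0 < H a) → G H H = F H) := by
  intro F G
  have hne : (univ : Finset (Fin k)).Nonempty := ⟨⟨0, hk⟩, mem_univ _⟩
  have hq : 2 - α ≤ 0 ∨ 1 ≤ 2 - α := hα.symm.imp (fun h => by linarith) (fun h => by linarith)
  have hexp : α - 1 = 1 - (2 - α) := by ring
  have hWmul : ∀ H : Fin k → ℝ, (∀ a, 0 < H a) → ∀ i, ∀ a ∈ univ, 0 < W i a * H a :=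
    fun H hH i a _ => mul_pos (hW i a) (hH a)
  have hF : ∀ H, F H =
      (∑ i, (-(2 - α) * V i ^ (1 - α) * (∑ a, W i a * H a) + (1 - α) * V i ^ (2 - α)))
        + ∑ i, (∑ a, W i a * H a) ^ (2 - α) := fun H => by
    rw [← sum_add_distrib]
    exact sum_congr rfl fun i _ => by ring
  refine ⟨fun H hH => ?_, fun H hH => ?_⟩
  · simp only [hF, G, hexp]
    gcongr with i
    exact rpow_sum_le_sum_rpow_mul_share hq hne (hWmul H hH i) (hWmul Ht hHt i)
  · simp only [hF, G, hexp, sum_rpow_mul_share_self _ hne (hWmul H hH _)]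
end

section
/- Let α ∈ ℝ with α ≠ 1 and α ≠ 2, let p, n, k ≥ 1, and let V ∈ ℝ^{p×n}, W ∈ ℝ^{p×k} and H ∈ ℝ^{k×n} have strictly positive entries. Define the update map U(H)_{aj} = H_{aj} · ( Σ_i (1/Σ_b W_{ib} H_{bj})^{α−1} W_{ia} / Σ_i W_{ia} V_{ij}^{1−α} )^{1/(α−1)}. Then H is a fixed point of U (i.e., U(H) = H) if and only if for every a and j, Σ_i W_{ia} (Σ_b W_{ib} H_{bj})^{1−α} = Σ_i W_{ia} V_{ij}^{1−α}, i.e., if and only if the partial derivative of D^d_α(WH‖V) with respect to each entry H_{aj} vanishes, so that H is a stationary point of the divergence. -/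
/-- Generalized dual Kullback–Leibler divergence `D^d_α(WH‖V)` between the
reconstruction `WH` and the positive matrix `V`. -/
noncomputable def dualDivNMF (α : ℝ) {p n k : ℕ} (V : Fin p → Fin n → ℝ)
    (W : Fin p → Fin k → ℝ) (H : Fin k → Fin n → ℝ) : ℝ :=
  ∑ i, ∑ j,
    ((∑ b, W i b * H b j) ^ (2 - α) - (2 - α) * (∑ b, W i b * H b j) * V i j ^ (1 - α)
      + (1 - α) * V i j ^ (2 - α)) / ((1 - α) * (2 - α))

/-!
The divergence is separable, and each cell is differentiable in the reconstructed value `s` with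
derivative `(s ^ (1 - α) - v ^ (1 - α)) / (1 - α)`. Since `WH` is affine in the entry `H a j`,
which enters only column `j`, with slope `W i a`, the partial derivative is `(A - B) / (1 - α)`,
where `A = ∑ i, W i a * (WH) i j ^ (1 - α)` and `B = ∑ i, W i a * V i j ^ (1 - α)`. The update
multiplies `H a j` by `(A / B) ^ (1 / (α - 1))`, so it leaves the entry unchanged exactly when
`A = B`, that is, when the partial derivative vanishes.
-/

/-- The contribution to `dualDivNMF` of one cell with reconstructed value `s` and data value `v`,
which reduces partial derivatives of the divergence to one-variable calculus. -/
noncomputable def dualDivCell (α s v : ℝ) : ℝ :=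
  (s ^ (2 - α) - (2 - α) * s * v ^ (1 - α) + (1 - α) * v ^ (2 - α)) / ((1 - α) * (2 - α))

theorem hasDerivAt_dualDivCell {α s : ℝ} (v : ℝ) (hα : α ≠ 2) (hs : s ≠ 0) :
    HasDerivAt (fun t => dualDivCell α t v) ((s ^ (1 - α) - v ^ (1 - α)) / (1 - α)) s := by
  have h2 : 2 - α ≠ 0 := sub_ne_zero.mpr hα.symm
  have hpow : HasDerivAt (fun t : ℝ => t ^ (2 - α)) ((2 - α) * s ^ (1 - α)) s := by
    convert Real.hasDerivAt_rpow_const (p := 2 - α) (Or.inl hs) using 3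
    ring
  have hlin : HasDerivAt (fun t : ℝ => (2 - α) * t * v ^ (1 - α)) ((2 - α) * v ^ (1 - α)) s := by
    simpa only [mul_one, id] using
      ((hasDerivAt_id s).const_mul (2 - α)).mul_const (v ^ (1 - α))
  refine (((hpow.sub hlin).add_const _).div_const _).congr_deriv ?_
  rw [← mul_sub, mul_comm (1 - α), mul_div_mul_left _ _ h2]

section Factorization

variable {ι κ ν : Type*} [Fintype κ]

theorem sum_mul_ite_entry [DecidableEq κ] [DecidableEq ν] {R : Type*} [NonUnitalNonAssocRing R]
    (w : κ → R) (H : κ → ν → R) (a : κ) (j j' : ν) (x : R) :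
    ∑ b, w b * (if b = a ∧ j' = j then x else H b j') =
      ∑ b, w b * H b j' + if j' = j then w a * (x - H a j) else 0 := by
  rw [← sub_eq_iff_eq_add', ← Finset.sum_sub_distrib]
  by_cases hj : j' = j
  · subst hj
    rw [if_pos rfl, Finset.sum_eq_single_of_mem a (Finset.mem_univ a) fun b _ hb => by simp [hb]]
    simp only [and_self, if_true, mul_sub]
  · simp [hj]

theorem hasDerivAt_dualDivCell_entry [DecidableEq κ] [DecidableEq ν] {α : ℝ} (hα : α ≠ 2)
    (v : ℝ) (w : κ → ℝ) (H : κ → ν → ℝ) (a : κ) (j j' : ν) (hwH : ∑ b, w b * H b j ≠ 0) :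
    HasDerivAt
      (fun x => dualDivCell α (∑ b, w b * (if b = a ∧ j' = j then x else H b j')) v)
      (if j' = j then
        (w a * (∑ b, w b * H b j) ^ (1 - α) - w a * v ^ (1 - α)) / (1 - α) else 0)
      (H a j) := by
  simp only [sum_mul_ite_entry]
  by_cases hj : j' = j
  · simp only [hj, if_true]
    have hinner : HasDerivAt (fun x => ∑ b, w b * H b j + w a * (x - H a j)) (w a) (H a j) := by
      simpa using (((hasDerivAt_id (H a j)).sub_const (H a j)).const_mul (w a)).const_add
        (∑ b, w b * H b j)
    have hcell := hasDerivAt_dualDivCell v hα hwH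
    refine (hcell.comp_of_eq _ hinner (by simp)).congr_deriv ?_
    ring
  · simpa only [hj, if_false, add_zero] using
      hasDerivAt_const (H a j) (dualDivCell α (∑ b, w b * H b j') v)

/-- The multiplicative update map `U` for minimizing `dualDivNMF` over the factor `H`, with `V` and
`W` held fixed. -/
noncomputable def dualDivUpdate [Fintype ι] (α : ℝ) (V : ι → ν → ℝ) (W : ι → κ → ℝ)
    (H : κ → ν → ℝ) : κ → ν → ℝ := fun a j =>
  H a j * ((∑ i, (1 / ∑ b, W i b * H b j) ^ (α - 1) * W i a) /
    (∑ i, W i a * V i j ^ (1 - α))) ^ (1 / (α - 1))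

theorem mul_div_rpow_eq_self_iff {h A B r : ℝ} (hh : h ≠ 0) (hA : 0 ≤ A) (hB : 0 < B)
    (hr : r ≠ 0) : h * (A / B) ^ r = h ↔ A = B := by
  rw [mul_eq_left₀ hh, ← Real.one_rpow r,
    Real.rpow_left_inj (div_nonneg hA hB.le) zero_le_one hr, div_eq_one_iff_eq hB.ne']

theorem dualDivUpdate_apply_eq_self_iff [Fintype ι] {α : ℝ} (hα : α ≠ 1) {V : ι → ν → ℝ}
    {W : ι → κ → ℝ} {H : κ → ν → ℝ} {a : κ} {j : ν} (hW : ∀ i, 0 ≤ W i a)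
    (hWH : ∀ i, 0 ≤ ∑ b, W i b * H b j) (hH : H a j ≠ 0)
    (hB : 0 < ∑ i, W i a * V i j ^ (1 - α)) :
    dualDivUpdate α V W H a j = H a j ↔
      ∑ i, W i a * (∑ b, W i b * H b j) ^ (1 - α) = ∑ i, W i a * V i j ^ (1 - α) := by
  have hnum : ∑ i, (1 / ∑ b, W i b * H b j) ^ (α - 1) * W i a =
      ∑ i, W i a * (∑ b, W i b * H b j) ^ (1 - α) := by
    refine Finset.sum_congr rfl fun i _ => ?_
    rw [one_div, ← Real.rpow_neg_eq_inv_rpow, neg_sub, mul_comm]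
  rw [dualDivUpdate, hnum]
  exact mul_div_rpow_eq_self_iff hH
    (Finset.sum_nonneg fun i _ => mul_nonneg (hW i) (Real.rpow_nonneg (hWH i) _)) hB
    (one_div_ne_zero (sub_ne_zero.mpr hα))

end Factorization

section Stationarity

variable {α : ℝ} {p n k : ℕ} {V : Fin p → Fin n → ℝ} {W : Fin p → Fin k → ℝ}
  {H : Fin k → Fin n → ℝ}

theorem hasDerivAt_dualDivNMF_entry (hα : α ≠ 2) (V : Fin p → Fin n → ℝ)
    {j : Fin n} (hWH : ∀ i, ∑ b, W i b * H b j ≠ 0) (a : Fin k) :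
    HasDerivAt
      (fun x => dualDivNMF α V W (fun a' j' => if a' = a ∧ j' = j then x else H a' j'))
      ((∑ i, W i a * (∑ b, W i b * H b j) ^ (1 - α) - ∑ i, W i a * V i j ^ (1 - α)) / (1 - α))
      (H a j) := by
  have hsum := HasDerivAt.fun_sum (u := Finset.univ) fun i _ =>
    HasDerivAt.fun_sum (u := Finset.univ) fun j' _ =>
      hasDerivAt_dualDivCell_entry hα (V i j') (W i) H a j j' (hWH i)
  refine hsum.congr_deriv ?_
  simp only [Finset.sum_ite_eq', Finset.mem_univ, if_true, ← Finset.sum_div,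
    Finset.sum_sub_distrib]

theorem hasDerivAt_dualDivNMF_entry_zero_iff (hα1 : α ≠ 1) (hα2 : α ≠ 2)
    {j : Fin n} (hWH : ∀ i, ∑ b, W i b * H b j ≠ 0) (a : Fin k) :
    HasDerivAt
        (fun x => dualDivNMF α V W (fun a' j' => if a' = a ∧ j' = j then x else H a' j'))
        0 (H a j) ↔
      ∑ i, W i a * (∑ b, W i b * H b j) ^ (1 - α) = ∑ i, W i a * V i j ^ (1 - α) := by
  have hderiv := hasDerivAt_dualDivNMF_entry hα2 V hWH a
  have hzero : (∑ i, W i a * (∑ b, W i b * H b j) ^ (1 - α) -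
      ∑ i, W i a * V i j ^ (1 - α)) / (1 - α) = 0 ↔
      ∑ i, W i a * (∑ b, W i b * H b j) ^ (1 - α) = ∑ i, W i a * V i j ^ (1 - α) := by
    rw [div_eq_zero_iff, or_iff_left (sub_ne_zero.mpr hα1.symm), sub_eq_zero]
  exact ⟨fun h => hzero.mp (hderiv.unique h), fun h => hzero.mpr h ▸ hderiv⟩

theorem fixed_point_iff_stationary_general (hα1 : α ≠ 1) (hα2 : α ≠ 2)
    (hV : ∀ i j, 0 < V i j) (hW : ∀ i a, 0 ≤ W i a) (hWcol : ∀ a, ∃ i, 0 < W i a)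
    (hH : ∀ a j, H a j ≠ 0) (hWH : ∀ i j, 0 < ∑ b, W i b * H b j) :
    (dualDivUpdate α V W H = H ↔ ∀ (a : Fin k) (j : Fin n),
        ∑ i, W i a * (∑ b, W i b * H b j) ^ (1 - α) = ∑ i, W i a * V i j ^ (1 - α)) ∧
    (dualDivUpdate α V W H = H ↔ ∀ (a : Fin k) (j : Fin n),
        HasDerivAt
          (fun x => dualDivNMF α V W (fun a' j' => if a' = a ∧ j' = j then x else H a' j'))
          0 (H a j)) := by
  have hB (a : Fin k) (j : Fin n) : 0 < ∑ i, W i a * V i j ^ (1 - α) := by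
    obtain ⟨i, hi⟩ := hWcol a
    exact Finset.sum_pos' (fun i _ => mul_nonneg (hW i a) (Real.rpow_nonneg (hV i j).le _))
      ⟨i, Finset.mem_univ i, mul_pos hi (Real.rpow_pos_of_pos (hV i j) _)⟩
  have hfixed : dualDivUpdate α V W H = H ↔ ∀ (a : Fin k) (j : Fin n),
      ∑ i, W i a * (∑ b, W i b * H b j) ^ (1 - α) = ∑ i, W i a * V i j ^ (1 - α) := by
    simp only [funext_iff]
    exact forall₂_congr fun a j => dualDivUpdate_apply_eq_self_iff hα1 (fun i => hW i a)
      (fun i => (hWH i j).le) (hH a j) (hB a j)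
  exact ⟨hfixed, hfixed.trans <| forall₂_congr fun a j =>
    (hasDerivAt_dualDivNMF_entry_zero_iff hα1 hα2 (fun i => (hWH i j).ne') a).symm⟩

end Stationarity

/-- `H` is a fixed point of the multiplicative update map `U` if and only if the
stationarity condition holds, i.e. iff every partial derivative of the divergence
with respect to an entry of `H` vanishes. -/
theorem fixed_point_iff_stationary (α : ℝ) (hα1 : α ≠ 1) (hα2 : α ≠ 2) (p n k : ℕ)
    (hp : 1 ≤ p) (hn : 1 ≤ n) (hk : 1 ≤ k)
    (V : Fin p → Fin n → ℝ) (W : Fin p → Fin k → ℝ) (H : Fin k → Fin n → ℝ)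
    (hV : ∀ i j, 0 < V i j) (hW : ∀ i a, 0 < W i a) (hH : ∀ a j, 0 < H a j) :
    let U : Fin k → Fin n → ℝ := fun a j => H a j *
      ((∑ i, (1 / ∑ b, W i b * H b j) ^ (α - 1) * W i a) /
        (∑ i, W i a * V i j ^ (1 - α))) ^ (1 / (α - 1))
    (U = H ↔ ∀ (a : Fin k) (j : Fin n),
        ∑ i, W i a * (∑ b, W i b * H b j) ^ (1 - α) = ∑ i, W i a * V i j ^ (1 - α)) ∧
    (U = H ↔ ∀ (a : Fin k) (j : Fin n),
        HasDerivAt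
          (fun x : ℝ =>
            dualDivNMF α V W (fun a' j' => if a' = a ∧ j' = j then x else H a' j'))
          0 (H a j)) := by
  have hWH (i : Fin p) (j : Fin n) : 0 < ∑ b, W i b * H b j :=
    Finset.sum_pos (fun b _ => mul_pos (hW i b) (hH b j)) ⟨⟨0, hk⟩, Finset.mem_univ _⟩
  exact fixed_point_iff_stationary_general hα1 hα2 hV (fun i a => (hW i a).le)
    (fun a => ⟨⟨0, hp⟩, hW _ a⟩) (fun a j => (hH a j).ne') hWH
end

section
/- Let α ∈ ℝ with α < 1 or α > 2, let p, k ≥ 1, fix a column index j, and let V_{ij} > 0, W_{ia} > 0, H^t_{aj} > 0 be given. With G(H, H^t) = Σ_i [ −(2−α) V_{ij}^{1−α} (Σ_a W_{ia} H_{aj}) + (1−α) V_{ij}^{2−α} ] + Σ_{i,a} (W_{ia} H_{aj})^{2−α} (W_{ia} H^t_{aj} / Σ_b W_{ib} H^t_{bj})^{α−1}, for each a the unique critical point in H_{aj} ∈ (0,∞) of G(·, H^t), obtained by solving ∂G/∂H_{aj} = 0, is H_{aj} = H^t_{aj} · ( Σ_i (1/Σ_b W_{ib} H^t_{bj})^{α−1}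 W_{ia} / Σ_i W_{ia} V_{ij}^{1−α} )^{1/(α−1)}, and G(·, H^t) attains its minimum over (0,∞) in each coordinate H_{aj} at this point. -/
/-!
The auxiliary function is separable: up to a constant it is a sum over `c` of functions of the
single coordinate `H c`. On `(0, ∞)` each of these has the form `A * x ^ q - q * B * x` with
`q = 2 - α` and `A, B > 0`, and the multiplicative update is the point `h` at which
`A * h ^ (q - 1) = B`. Hence the `c`-th function is `A` times the difference between `x ^ q` and
its tangent line at `h`, up to a constant. Since `q` lies outside `[0, 1]`, the power `x ^ q` is
strictly convex, so it stays above this line and has the same slope only at `h`.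
-/

section RpowTangent

variable {q h x A C : ℝ} {f : ℝ → ℝ}

theorem one_add_mul_sub_one_le_rpow (hq : q ≤ 0 ∨ 1 ≤ q) (hx : 0 < x) :
    1 + q * (x - 1) ≤ x ^ q := by
  rcases hq with hq | hq
  · calc
      1 + q * (x - 1) ≤ Real.log x * q + 1 := by
        linarith [mul_le_mul_of_nonpos_right (Real.log_le_sub_one_of_pos hx) hq]
      _ ≤ Real.exp (Real.log x * q) := Real.add_one_le_exp _
      _ = x ^ q := (Real.rpow_def_of_pos hx q).symm
  · simpa using one_add_mul_self_le_rpow_one_add (s := x - 1) (by linarith) hq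

theorem rpow_add_mul_sub_le_rpow (hq : q ≤ 0 ∨ 1 ≤ q) (hh : 0 < h) (hx : 0 < x) :
    h ^ q + q * h ^ (q - 1) * (x - h) ≤ x ^ q := by
  have hpow : 0 < h ^ q := Real.rpow_pos_of_pos hh q
  calc
    h ^ q + q * h ^ (q - 1) * (x - h) = (1 + q * (x / h - 1)) * h ^ q := by
      rw [Real.rpow_sub_one hh.ne']
      field_simp
    _ ≤ (x / h) ^ q * h ^ q := by
      gcongr
      exact one_add_mul_sub_one_le_rpow hq (div_pos hx hh)
    _ = x ^ q := by rw [Real.div_rpow hx.le hh.le, div_mul_cancel₀ _ hpow.ne']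

theorem hasDerivAt_rpow_sub_tangent (hx : x ≠ 0) :
    HasDerivAt (fun y ↦ C + A * (y ^ q - q * h ^ (q - 1) * y))
      (A * q * (x ^ (q - 1) - h ^ (q - 1))) x := by
  have hpow := Real.hasDerivAt_rpow_const (p := q) (Or.inl hx)
  have hline := (hasDerivAt_id x).const_mul (q * h ^ (q - 1))
  refine (((hpow.sub hline).const_mul A).const_add C).congr_deriv ?_
  ring

theorem hasDerivAt_zero_iff_of_eq_rpow_sub_tangent (hq₀ : q ≠ 0) (hq₁ : q ≠ 1) (hA : A ≠ 0)
    (hh : 0 < h) (hx : 0 < x) (hf : ∀ y, 0 < y → f y = C + A * (y ^ q - q * h ^ (q - 1) * y)) :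
    HasDerivAt f 0 x ↔ x = h := by
  have hderiv : HasDerivAt f (A * q * (x ^ (q - 1) - h ^ (q - 1))) x :=
    (hasDerivAt_rpow_sub_tangent hx.ne').congr_of_eventuallyEq
      ((eventually_gt_nhds hx).mono hf)
  calc
    HasDerivAt f 0 x ↔ A * q * (x ^ (q - 1) - h ^ (q - 1)) = 0 :=
      ⟨hderiv.unique, fun hzero ↦ hzero ▸ hderiv⟩
    _ ↔ x ^ (q - 1) = h ^ (q - 1) := by
      rw [mul_eq_zero_iff_left (mul_ne_zero hA hq₀), sub_eq_zero]
    _ ↔ x = h := Real.rpow_left_inj hx.le hh.le (sub_ne_zero.mpr hq₁)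

theorem le_of_eq_rpow_sub_tangent (hq : q ≤ 0 ∨ 1 ≤ q) (hA : 0 ≤ A) (hh : 0 < h) (hx : 0 < x)
    (hf : ∀ y, 0 < y → f y = C + A * (y ^ q - q * h ^ (q - 1) * y)) : f h ≤ f x := by
  rw [hf h hh, hf x hx]
  gcongr C + A * ?_
  linarith [rpow_add_mul_sub_le_rpow hq hh hx]

end RpowTangent

theorem sum_apply_update {κ β M : Type*} [Fintype κ] [DecidableEq κ] [AddCommMonoid M]
    (f : κ → β → M) (H : κ → β) (a : κ) (x : β) :
    ∑ c, f c (Function.update H a x c) = f a x + ∑ c ∈ Finset.univ \ {a}, f c (H c) := by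
  simp only [Function.apply_update f]
  exact Finset.sum_update_of_mem (Finset.mem_univ a) _ _

section DualKL

variable {ι κ : Type*} [Fintype ι]

/-- The denominator of the multiplicative update factor for the coordinate `a`. -/
noncomputable def updateDenominator (α : ℝ) (V : ι → ℝ) (W : ι → κ → ℝ) (a : κ) : ℝ :=
  ∑ i, W i a * V i ^ (1 - α)

theorem updateDenominator_pos [Nonempty ι] {α : ℝ} {V : ι → ℝ} {W : ι → κ → ℝ} {a : κ}
    (hV : ∀ i, 0 < V i) (hW : ∀ i, 0 < W i a) : 0 < updateDenominator α V W a :=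
  Finset.sum_pos (fun i _ ↦ mul_pos (hW i) (Real.rpow_pos_of_pos (hV i) _))
    Finset.univ_nonempty

variable [Fintype κ]

/-- The auxiliary function `G(H, H^t)` of the generalized dual Kullback–Leibler divergence for one
column of the factorization `V ≈ W * H`; `V`, `Ht` and `H` are the corresponding columns. -/
noncomputable def dualKLAuxiliary (α : ℝ) (V : ι → ℝ) (W : ι → κ → ℝ) (Ht H : κ → ℝ) : ℝ :=
  (∑ i, (-(2 - α) * V i ^ (1 - α) * (∑ c, W i c * H c) + (1 - α) * V i ^ (2 - α)))
    + ∑ i, ∑ c, (W i c * H c) ^ (2 - α) * (W i c * Ht c / ∑ b, W i b * Ht b) ^ (α - 1)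

/-- The numerator of the multiplicative update factor for the coordinate `a`. -/
noncomputable def updateNumerator (α : ℝ) (W : ι → κ → ℝ) (Ht : κ → ℝ) (a : κ) : ℝ :=
  ∑ i, (1 / ∑ b, W i b * Ht b) ^ (α - 1) * W i a

/-- The value that the multiplicative update rule assigns to the coordinate `a`. -/
noncomputable def multiplicativeUpdate (α : ℝ) (V : ι → ℝ) (W : ι → κ → ℝ) (Ht : κ → ℝ)
    (a : κ) : ℝ :=
  Ht a * (updateNumerator α W Ht a / updateDenominator α V W a) ^ (1 / (α - 1))

/-- The part of `dualKLAuxiliary` that depends on the coordinate `c`, as a function of the value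
`y` of that coordinate. -/
noncomputable def coordinateAuxiliary (α : ℝ) (V : ι → ℝ) (W : ι → κ → ℝ) (Ht : κ → ℝ) (c : κ)
    (y : ℝ) : ℝ :=
  (∑ i, (W i c * y) ^ (2 - α) * (W i c * Ht c / ∑ b, W i b * Ht b) ^ (α - 1))
    - (2 - α) * updateDenominator α V W c * y

variable {α : ℝ} {V : ι → ℝ} {W : ι → κ → ℝ} {Ht : κ → ℝ} {a : κ}

theorem updateNumerator_pos [Nonempty ι] (hW : ∀ i, 0 < W i a)
    (hWHt : ∀ i, 0 < ∑ b, W i b * Ht b) : 0 < updateNumerator α W Ht a :=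
  Finset.sum_pos
    (fun i _ ↦ mul_pos (Real.rpow_pos_of_pos (one_div_pos.mpr (hWHt i)) _) (hW i))
    Finset.univ_nonempty

theorem multiplicativeUpdate_pos (hHt : 0 < Ht a) (hN : 0 < updateNumerator α W Ht a)
    (hD : 0 < updateDenominator α V W a) : 0 < multiplicativeUpdate α V W Ht a :=
  mul_pos hHt (Real.rpow_pos_of_pos (div_pos hN hD) _)

theorem multiplicativeUpdate_rpow (hα : α ≠ 1) (hHt : 0 ≤ Ht a)
    (hND : 0 ≤ updateNumerator α W Ht a / updateDenominator α V W a) :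
    multiplicativeUpdate α V W Ht a ^ (α - 1) =
      Ht a ^ (α - 1) * (updateNumerator α W Ht a / updateDenominator α V W a) := by
  rw [multiplicativeUpdate, Real.mul_rpow hHt (Real.rpow_nonneg hND _), ← Real.rpow_mul hND,
    one_div_mul_cancel (sub_ne_zero.mpr hα), Real.rpow_one]

theorem updateNumerator_mul_multiplicativeUpdate_rpow (hα : α ≠ 1) (hHt : 0 < Ht a)
    (hN : 0 < updateNumerator α W Ht a) (hD : 0 < updateDenominator α V W a) :
    Ht a ^ (α - 1) * updateNumerator α W Ht a * multiplicativeUpdate α V W Ht a ^ (1 - α) =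
      updateDenominator α V W a := by
  rw [← neg_sub α 1, Real.rpow_neg (multiplicativeUpdate_pos hHt hN hD).le,
    multiplicativeUpdate_rpow hα hHt.le (div_pos hN hD).le]
  field_simp

theorem dualKLAuxiliary_eq_add_sum_coordinateAuxiliary (H : κ → ℝ) :
    dualKLAuxiliary α V W Ht H =
      ∑ i, (1 - α) * V i ^ (2 - α) + ∑ c, coordinateAuxiliary α V W Ht c (H c) := by
  have hlinear : ∑ i, -(2 - α) * V i ^ (1 - α) * (∑ c, W i c * H c) =
      -∑ c, (2 - α) * updateDenominator α V W c * H c := by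
    simp only [updateDenominator, Finset.mul_sum, Finset.sum_mul, ← Finset.sum_neg_distrib]
    rw [Finset.sum_comm]
    exact Finset.sum_congr rfl fun c _ ↦ Finset.sum_congr rfl fun i _ ↦ by ring
  simp only [dualKLAuxiliary, coordinateAuxiliary]
  rw [Finset.sum_add_distrib, Finset.sum_sub_distrib, hlinear, Finset.sum_comm (γ := κ)]
  ring

theorem mul_rpow_mul_div_rpow {w t y s : ℝ} (hw : 0 < w) (ht : 0 ≤ t) (hy : 0 ≤ y) (hs : 0 ≤ s) :
    (w * y) ^ (2 - α) * (w * t / s) ^ (α - 1) =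
      t ^ (α - 1) * ((1 / s) ^ (α - 1) * w) * y ^ (2 - α) := by
  have hs' : 0 ≤ 1 / s := one_div_nonneg.mpr hs
  have hexp : w ^ (2 - α) * w ^ (α - 1) = w := by
    rw [← Real.rpow_add hw, sub_add_sub_cancel, show (2 : ℝ) - 1 = 1 by norm_num, Real.rpow_one]
  calc
    (w * y) ^ (2 - α) * (w * t / s) ^ (α - 1)
        = (w ^ (2 - α) * y ^ (2 - α)) * (w ^ (α - 1) * t ^ (α - 1) * (1 / s) ^ (α - 1)) := by
      rw [div_eq_mul_one_div (w * t) s, Real.mul_rpow hw.le hy,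
        Real.mul_rpow (mul_nonneg hw.le ht) hs', Real.mul_rpow hw.le ht]
    _ = t ^ (α - 1) * ((1 / s) ^ (α - 1) * (w ^ (2 - α) * w ^ (α - 1))) * y ^ (2 - α) := by ring
    _ = t ^ (α - 1) * ((1 / s) ^ (α - 1) * w) * y ^ (2 - α) := by rw [hexp]

theorem coordinateAuxiliary_eq {y : ℝ} (hW : ∀ i, 0 < W i a)
    (hWHt : ∀ i, 0 ≤ ∑ b, W i b * Ht b) (hHt : 0 ≤ Ht a) (hy : 0 ≤ y) :
    coordinateAuxiliary α V W Ht a y =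
      Ht a ^ (α - 1) * updateNumerator α W Ht a * y ^ (2 - α)
        - (2 - α) * updateDenominator α V W a * y := by
  rw [coordinateAuxiliary, updateNumerator, Finset.mul_sum, Finset.sum_mul]
  congr! 2 with i
  exact mul_rpow_mul_div_rpow (hW i) hHt hy (hWHt i)

theorem exists_dualKLAuxiliary_update_eq [Nonempty ι] [DecidableEq κ] (hα : α ≠ 1)
    (hV : ∀ i, 0 < V i) (hW : ∀ i, 0 < W i a) (hWHt : ∀ i, 0 < ∑ b, W i b * Ht b)
    (hHt : 0 < Ht a) (H : κ → ℝ) :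
    ∃ C, ∀ y, 0 < y → dualKLAuxiliary α V W Ht (Function.update H a y) =
      C + Ht a ^ (α - 1) * updateNumerator α W Ht a *
        (y ^ (2 - α) - (2 - α) * multiplicativeUpdate α V W Ht a ^ (2 - α - 1) * y) := by
  refine ⟨∑ i, (1 - α) * V i ^ (2 - α) +
    ∑ c ∈ Finset.univ \ {a}, coordinateAuxiliary α V W Ht c (H c), fun y hy ↦ ?_⟩
  have hcritical := updateNumerator_mul_multiplicativeUpdate_rpow hα hHt
    (updateNumerator_pos hW hWHt) (updateDenominator_pos hV hW)
  rw [dualKLAuxiliary_eq_add_sum_coordinateAuxiliary, sum_apply_update,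
    coordinateAuxiliary_eq hW (fun i ↦ (hWHt i).le) hHt.le hy.le, ← hcritical,
    show 2 - α - 1 = 1 - α by ring]
  ring

theorem auxiliary_critical_point_general [Nonempty ι] [DecidableEq κ] (hα : α < 1 ∨ 2 < α)
    (hV : ∀ i, 0 < V i) (hW : ∀ i c, 0 < W i c) (hHt : ∀ c, 0 < Ht c) (a : κ) (H : κ → ℝ) :
    let g : ℝ → ℝ := fun x ↦ dualKLAuxiliary α V W Ht (Function.update H a x)
    let hstar : ℝ := multiplicativeUpdate α V W Ht a
    0 < hstar ∧ (∀ x ∈ Set.Ioi (0 : ℝ), (HasDerivAt g 0 x ↔ x = hstar)) ∧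
      ∀ x ∈ Set.Ioi (0 : ℝ), g hstar ≤ g x := by
  intro g hstar
  have hWHt (i : ι) : 0 < ∑ b, W i b * Ht b :=
    Finset.sum_pos (fun b _ ↦ mul_pos (hW i b) (hHt b)) ⟨a, Finset.mem_univ a⟩
  have hN : 0 < updateNumerator α W Ht a := updateNumerator_pos (hW · a) hWHt
  have hA : 0 < Ht a ^ (α - 1) * updateNumerator α W Ht a :=
    mul_pos (Real.rpow_pos_of_pos (hHt a) _) hN
  have hpos : 0 < hstar :=
    multiplicativeUpdate_pos (hHt a) hN (updateDenominator_pos hV (hW · a))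
  have hα₁ : α ≠ 1 := by grind
  obtain ⟨C, hg⟩ := exists_dualKLAuxiliary_update_eq hα₁ hV (hW · a) hWHt (hHt a) H
  refine ⟨hpos, fun x hx ↦ ?_, fun x hx ↦ ?_⟩
  · exact hasDerivAt_zero_iff_of_eq_rpow_sub_tangent (by grind) (by grind) hA.ne' hpos hx hg
  · exact le_of_eq_rpow_sub_tangent (by grind) hA.le hpos hx hg

end DualKL

/-- The multiplicative update value `H^{t+1}_{aj}` is the unique critical point of the
auxiliary function `G(·, H^t)` in the coordinate `H_{aj}` on `(0,∞)`, and `G(·, H^t)`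
attains its minimum in that coordinate there. -/
theorem auxiliary_critical_point (α : ℝ) (hα : α < 1 ∨ 2 < α) (p k : ℕ)
    (hp : 1 ≤ p) (hk : 1 ≤ k)
    (V : Fin p → ℝ) (W : Fin p → Fin k → ℝ) (Ht : Fin k → ℝ)
    (hV : ∀ i, 0 < V i) (hW : ∀ i a, 0 < W i a) (hHt : ∀ a, 0 < Ht a)
    (a : Fin k) (H : Fin k → ℝ) (hH : ∀ b, 0 < H b) :
    let G : (Fin k → ℝ) → ℝ := fun H' =>
      (∑ i, (-(2 - α) * V i ^ (1 - α) * (∑ c, W i c * H' c) + (1 - α) * V i ^ (2 - α)))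
        + ∑ i, ∑ c, (W i c * H' c) ^ (2 - α) * (W i c * Ht c / ∑ b, W i b * Ht b) ^ (α - 1)
    let g : ℝ → ℝ := fun x => G (Function.update H a x)
    let hstar : ℝ := Ht a *
      ((∑ i, (1 / ∑ b, W i b * Ht b) ^ (α - 1) * W i a) /
        (∑ i, W i a * V i ^ (1 - α))) ^ (1 / (α - 1))
    0 < hstar ∧ (∀ x ∈ Set.Ioi (0 : ℝ), (HasDerivAt g 0 x ↔ x = hstar)) ∧
      (∀ x ∈ Set.Ioi (0 : ℝ), g hstar ≤ g x) := by
  have : Nonempty (Fin p) := Fin.pos_iff_nonempty.mp hp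
  exact auxiliary_critical_point_general hα hV hW hHt a H
end

section
/- (Theorem 1, W-update) Let α ∈ ℝ with α ≠ 1 and α ≠ 2, let p, n, k ≥ 1, and let V ∈ ℝ^{p×n}, W^t ∈ ℝ^{p×k}, H ∈ ℝ^{k×n} have strictly positive entries. Define W^{t+1}_{ia} = W^t_{ia} · ( Σ_j (1/Σ_b W^t_{ib} H_{bj})^{α−1} H_{aj} / Σ_j H_{aj} V_{ij}^{1−α} )^{1/(α−1)}. Then D^d_α(W^{t+1} H ‖ V) ≤ D^d_α(W^t H ‖ V); i.e., the generalized dual Kullback–Leibler divergence is non-increasing under the multiplicative update rule for W. -/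
/-!
The scalar divergence `d(x, v)` is convex in `x`. Fix a row `i`, put `s = ∑ b, W i b * H b j` and
multiply each `W i b` by `r b > 0`. Since `∑ b, W i b * r b * H b j` is the average of the points
`s * r b` with weights `W i b * H b j / s`, Jensen's inequality bounds the new divergence by the
average of the `d(s * r b, v)`, and the tangent line of `d(·, v)` at `s * r b` bounds each of these
by `d(s, v) + d'(s * r b, v) * (s * r b - s)`. Summed over `j`, the first-order terms cancel,
because the multiplicative update is exactly the choice of `r` for which
`∑ j, H b j * d'(s * r b, V i j) = 0` for every `b`.
-/

open Set

section ConvexDescent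

variable {ι κ : Type*} [Fintype ι] [Fintype κ]

theorem convexOn_le_add_deriv_mul_sub {S : Set ℝ} {f : ℝ → ℝ} {f' x y : ℝ} (hf : ConvexOn ℝ S f)
    (hx : x ∈ S) (hy : y ∈ S) (hf' : HasDerivAt f f' x) : f x ≤ f y + f' * (x - y) := by
  rcases lt_trichotomy x y with hxy | rfl | hyx
  · have hslope := hf.le_slope_of_hasDerivAt hx hy hxy hf'
    rw [slope_def_field, le_div_iff₀ (sub_pos.2 hxy)] at hslope
    linarith
  · simp
  · have hslope := hf.slope_le_of_hasDerivAt hy hx hyx hf'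
    rw [slope_def_field, div_le_iff₀ (sub_pos.2 hyx)] at hslope
    linarith

theorem convexOn_map_sum_mul_le {S : Set ℝ} {f : ℝ → ℝ} (hf : ConvexOn ℝ S f) {c r : κ → ℝ}
    (hc : ∀ b, 0 ≤ c b) (hs : 0 < ∑ b, c b) (hmem : ∀ b, (∑ a, c a) * r b ∈ S) :
    f (∑ b, c b * r b) ≤ ∑ b, c b / (∑ a, c a) * f ((∑ a, c a) * r b) := by
  have hweights : ∑ b, c b / (∑ a, c a) = 1 := by rw [← Finset.sum_div, div_self hs.ne']
  have haverage : ∑ b, c b * r b = ∑ b, c b / (∑ a, c a) * ((∑ a, c a) * r b) :=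
    Finset.sum_congr rfl fun b _ => by field_simp
  rw [haverage]
  exact hf.map_sum_le (fun b _ => div_nonneg (hc b) hs.le) hweights fun b _ => hmem b

theorem convexOn_map_sum_mul_le_map_sum_add {S : Set ℝ} {f f' : ℝ → ℝ} (hf : ConvexOn ℝ S f)
    (hf' : ∀ x ∈ S, HasDerivAt f (f' x) x) {c r : κ → ℝ} (hc : ∀ b, 0 ≤ c b)
    (hs : 0 < ∑ b, c b) (hsS : ∑ b, c b ∈ S) (hmem : ∀ b, (∑ a, c a) * r b ∈ S) :
    f (∑ b, c b * r b) ≤ f (∑ b, c b) + ∑ b, c b * (r b - 1) * f' ((∑ a, c a) * r b) := by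
  set s := ∑ b, c b with hs_def
  calc f (∑ b, c b * r b)
      ≤ ∑ b, c b / s * f (s * r b) := convexOn_map_sum_mul_le hf hc hs hmem
    _ ≤ ∑ b, c b / s * (f s + f' (s * r b) * (s * r b - s)) := by
        gcongr with b
        · exact div_nonneg (hc b) hs.le
        · exact convexOn_le_add_deriv_mul_sub hf (hmem b) hsS (hf' _ (hmem b))
    _ = ∑ b, (c b / s * f s + c b * (r b - 1) * f' (s * r b)) :=
        Finset.sum_congr rfl fun b _ => by field_simp
    _ = f s + ∑ b, c b * (r b - 1) * f' (s * r b) := by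
        rw [Finset.sum_add_distrib, ← Finset.sum_mul, ← Finset.sum_div, ← hs_def,
          div_self hs.ne', one_mul]

theorem sum_convexOn_map_rescale_le {S : Set ℝ} {f f' : ι → ℝ → ℝ}
    (hf : ∀ j, ConvexOn ℝ S (f j)) (hf' : ∀ j, ∀ x ∈ S, HasDerivAt (f j) (f' j x) x)
    {w r : κ → ℝ} {H : κ → ι → ℝ} (hw : ∀ b, 0 ≤ w b) (hH : ∀ b j, 0 ≤ H b j)
    (hs : ∀ j, 0 < ∑ b, w b * H b j) (hsS : ∀ j, ∑ b, w b * H b j ∈ S)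
    (hmem : ∀ j b, (∑ a, w a * H a j) * r b ∈ S)
    (hstat : ∀ b, ∑ j, H b j * f' j ((∑ a, w a * H a j) * r b) = 0) :
    ∑ j, f j (∑ b, w b * r b * H b j) ≤ ∑ j, f j (∑ b, w b * H b j) := by
  have hfirstOrder : ∑ j, ∑ b, w b * H b j * (r b - 1) * f' j ((∑ a, w a * H a j) * r b) = 0 := by
    rw [Finset.sum_comm]
    refine Finset.sum_eq_zero fun b _ => ?_
    calc ∑ j, w b * H b j * (r b - 1) * f' j ((∑ a, w a * H a j) * r b)
        = w b * (r b - 1) * ∑ j, H b j * f' j ((∑ a, w a * H a j) * r b) := by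
          rw [Finset.mul_sum]
          exact Finset.sum_congr rfl fun j _ => by ring
      _ = 0 := by rw [hstat b, mul_zero]
  calc ∑ j, f j (∑ b, w b * r b * H b j)
      = ∑ j, f j (∑ b, w b * H b j * r b) := by simp only [mul_right_comm]
    _ ≤ ∑ j, (f j (∑ b, w b * H b j) +
          ∑ b, w b * H b j * (r b - 1) * f' j ((∑ a, w a * H a j) * r b)) :=
        Finset.sum_le_sum fun j _ => convexOn_map_sum_mul_le_map_sum_add (hf j) (hf' j)
          (fun b => mul_nonneg (hw b) (hH b j)) (hs j) (hsS j) (hmem j)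
    _ = ∑ j, f j (∑ b, w b * H b j) := by rw [Finset.sum_add_distrib, hfirstOrder, add_zero]

end ConvexDescent

/-- The generalized dual Kullback–Leibler divergence `d_α(x‖v)` between two positive numbers, for
`α ≠ 1, 2`; `dualDivNMF` is its sum over the entries of the two matrices. The reference
`v` comes before `x` so that `dualKLDiv α v` is the function of `x` that is differentiated. -/
noncomputable def dualKLDiv (α v x : ℝ) : ℝ :=
  (x ^ (2 - α) - (2 - α) * x * v ^ (1 - α) + (1 - α) * v ^ (2 - α)) / ((1 - α) * (2 - α))

theorem hasDerivAt_dualKLDiv {α : ℝ} (hα1 : α ≠ 1) (hα2 : α ≠ 2) (v : ℝ) {x : ℝ} (hx : x ≠ 0) :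
    HasDerivAt (dualKLDiv α v) ((x ^ (1 - α) - v ^ (1 - α)) / (1 - α)) x := by
  have h1 : 1 - α ≠ 0 := sub_ne_zero.2 hα1.symm
  have h2 : 2 - α ≠ 0 := sub_ne_zero.2 hα2.symm
  have hpow : HasDerivAt (fun y : ℝ => y ^ (2 - α)) ((2 - α) * x ^ (1 - α)) x := by
    refine (Real.hasDerivAt_rpow_const (p := 2 - α) (Or.inl hx)).congr_deriv ?_
    rw [show 2 - α - 1 = 1 - α by ring]
  have hlin : HasDerivAt (fun y : ℝ => (2 - α) * y * v ^ (1 - α)) ((2 - α) * v ^ (1 - α)) x := by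
    simpa only [id, mul_one] using ((hasDerivAt_id x).const_mul (2 - α)).mul_const (v ^ (1 - α))
  refine (((hpow.sub hlin).add_const ((1 - α) * v ^ (2 - α))).div_const
    ((1 - α) * (2 - α))).congr_deriv ?_
  field_simp

theorem hasDerivAt_rpow_one_sub_div {α : ℝ} (hα1 : α ≠ 1) (c : ℝ) {x : ℝ} (hx : x ≠ 0) :
    HasDerivAt (fun y : ℝ => (y ^ (1 - α) - c) / (1 - α)) (x ^ (-α)) x := by
  have h1 : 1 - α ≠ 0 := sub_ne_zero.2 hα1.symm
  refine (((Real.hasDerivAt_rpow_const (p := 1 - α) (Or.inl hx)).sub_const c).div_const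
    (1 - α)).congr_deriv ?_
  rw [mul_div_cancel_left₀ _ h1, sub_sub_cancel_left]

theorem convexOn_dualKLDiv {α : ℝ} (hα1 : α ≠ 1) (hα2 : α ≠ 2) (v : ℝ) :
    ConvexOn ℝ (Ioi 0) (dualKLDiv α v) := by
  refine convexOn_of_hasDerivWithinAt2_nonneg (convex_Ioi 0)
    (f' := fun x => (x ^ (1 - α) - v ^ (1 - α)) / (1 - α)) (f'' := fun x => x ^ (-α))
    (fun x hx => (hasDerivAt_dualKLDiv hα1 hα2 v (ne_of_gt hx)).continuousAt.continuousWithinAt)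
    ?_ ?_ ?_ <;> intro x hx <;> rw [interior_Ioi] at hx
  · exact (hasDerivAt_dualKLDiv hα1 hα2 v (ne_of_gt hx)).hasDerivWithinAt
  · exact (hasDerivAt_rpow_one_sub_div hα1 _ (ne_of_gt hx)).hasDerivWithinAt
  · exact Real.rpow_nonneg (le_of_lt hx) _

section UpdateFactor

variable {ι : Type*} [Fintype ι] {α : ℝ} {v s h : ι → ℝ}

/-- The factor by which the multiplicative update rule rescales the entry `W i a`, as a function of
the rows `v = V i`, `s = (W * H) i` and `h = H a`. -/
noncomputable def dualKLUpdateFactor (α : ℝ) (v s h : ι → ℝ) : ℝ :=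
  ((∑ j, (1 / s j) ^ (α - 1) * h j) / ∑ j, h j * v j ^ (1 - α)) ^ (1 / (α - 1))

theorem sum_mul_pos_of_ne_zero {c : ι → ℝ} (hh : 0 ≤ h) (hh0 : h ≠ 0) (hc : ∀ j, 0 < c j) :
    0 < ∑ j, h j * c j := by
  obtain ⟨j, hj⟩ := Function.ne_iff.1 hh0
  exact Finset.sum_pos' (fun j _ => mul_nonneg (hh j) (hc j).le)
    ⟨j, Finset.mem_univ j, mul_pos ((hh j).lt_of_ne' hj) (hc j)⟩

theorem dualKLUpdateFactor_eq (hs : ∀ j, 0 < s j) :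
    dualKLUpdateFactor α v s h =
      ((∑ j, h j * s j ^ (1 - α)) / ∑ j, h j * v j ^ (1 - α)) ^ (1 / (α - 1)) := by
  have hterm (j : ι) : (1 / s j) ^ (α - 1) * h j = h j * s j ^ (1 - α) := by
    rw [one_div, Real.inv_rpow (hs j).le, ← Real.rpow_neg (hs j).le, neg_sub, mul_comm]
  simp only [dualKLUpdateFactor, hterm]

theorem dualKLUpdateFactor_pos (hv : ∀ j, 0 < v j) (hs : ∀ j, 0 < s j) (hh : 0 ≤ h)
    (hh0 : h ≠ 0) : 0 < dualKLUpdateFactor α v s h := by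
  rw [dualKLUpdateFactor_eq hs]
  exact Real.rpow_pos_of_pos
    (div_pos (sum_mul_pos_of_ne_zero hh hh0 fun j => Real.rpow_pos_of_pos (hs j) _)
      (sum_mul_pos_of_ne_zero hh hh0 fun j => Real.rpow_pos_of_pos (hv j) _)) _

theorem dualKLUpdateFactor_rpow_mul (hα1 : α ≠ 1) (hv : ∀ j, 0 < v j) (hs : ∀ j, 0 < s j)
    (hh : 0 ≤ h) (hh0 : h ≠ 0) :
    dualKLUpdateFactor α v s h ^ (1 - α) * ∑ j, h j * s j ^ (1 - α) =
      ∑ j, h j * v j ^ (1 - α) := by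
  have hnum : 0 < ∑ j, h j * s j ^ (1 - α) :=
    sum_mul_pos_of_ne_zero hh hh0 fun j => Real.rpow_pos_of_pos (hs j) _
  have hden : 0 < ∑ j, h j * v j ^ (1 - α) :=
    sum_mul_pos_of_ne_zero hh hh0 fun j => Real.rpow_pos_of_pos (hv j) _
  have hexp : 1 / (α - 1) * (1 - α) = -1 := by
    rw [← neg_sub α 1, mul_neg, one_div_mul_cancel (sub_ne_zero.2 hα1)]
  rw [dualKLUpdateFactor_eq hs, ← Real.rpow_mul (div_pos hnum hden).le, hexp, Real.rpow_neg_one,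
    inv_div, div_mul_cancel₀ _ hnum.ne']

theorem sum_mul_deriv_dualKLDiv_updateFactor_eq_zero (hα1 : α ≠ 1) (hv : ∀ j, 0 < v j)
    (hs : ∀ j, 0 < s j) (hh : 0 ≤ h) (hh0 : h ≠ 0) :
    ∑ j, h j * (((s j * dualKLUpdateFactor α v s h) ^ (1 - α) - v j ^ (1 - α)) / (1 - α)) = 0 := by
  have hr := dualKLUpdateFactor_pos (α := α) hv hs hh hh0
  have hbalance := dualKLUpdateFactor_rpow_mul hα1 hv hs hh hh0
  set r := dualKLUpdateFactor α v s h
  calc ∑ j, h j * (((s j * r) ^ (1 - α) - v j ^ (1 - α)) / (1 - α))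
      = (r ^ (1 - α) * ∑ j, h j * s j ^ (1 - α) - ∑ j, h j * v j ^ (1 - α)) / (1 - α) := by
        rw [Finset.mul_sum, ← Finset.sum_sub_distrib, Finset.sum_div]
        refine Finset.sum_congr rfl fun j _ => ?_
        rw [Real.mul_rpow (hs j).le hr.le]
        ring
    _ = 0 := by rw [hbalance, sub_self, zero_div]

theorem sum_dualKLDiv_update_le {κ : Type*} [Fintype κ] (hα1 : α ≠ 1) (hα2 : α ≠ 2)
    {w : κ → ℝ} {H : κ → ι → ℝ} (hv : ∀ j, 0 < v j) (hw : ∀ b, 0 ≤ w b) (hH : ∀ b, 0 ≤ H b)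
    (hH0 : ∀ b, H b ≠ 0) (hs : ∀ j, 0 < ∑ b, w b * H b j) :
    ∑ j, dualKLDiv α (v j)
        (∑ b, w b * dualKLUpdateFactor α v (fun j => ∑ a, w a * H a j) (H b) * H b j) ≤
      ∑ j, dualKLDiv α (v j) (∑ b, w b * H b j) :=
  sum_convexOn_map_rescale_le (fun j => convexOn_dualKLDiv hα1 hα2 (v j))
    (fun j _ hx => hasDerivAt_dualKLDiv hα1 hα2 (v j) (ne_of_gt hx)) hw hH hs hs
    (fun j b => mul_pos (hs j) (dualKLUpdateFactor_pos hv hs (hH b) (hH0 b)))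
    fun b => sum_mul_deriv_dualKLDiv_updateFactor_eq_zero hα1 hv hs (hH b) (hH0 b)

end UpdateFactor

theorem dualDivNMF_nonincreasing_W_update_general {α : ℝ} (hα1 : α ≠ 1) (hα2 : α ≠ 2)
    {p n k : ℕ} {V : Fin p → Fin n → ℝ} {Wt : Fin p → Fin k → ℝ} {H : Fin k → Fin n → ℝ}
    (hV : ∀ i j, 0 < V i j) (hWt : ∀ i a, 0 ≤ Wt i a) (hH : ∀ a j, 0 ≤ H a j)
    (hH0 : ∀ a, H a ≠ 0) (hWH : ∀ i j, 0 < ∑ b, Wt i b * H b j) :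
    let Wnext : Fin p → Fin k → ℝ := fun i a => Wt i a *
      ((∑ j, (1 / ∑ b, Wt i b * H b j) ^ (α - 1) * H a j) /
        (∑ j, H a j * V i j ^ (1 - α))) ^ (1 / (α - 1))
    dualDivNMF α V Wnext H ≤ dualDivNMF α V Wt H :=
  Finset.sum_le_sum fun i _ => sum_dualKLDiv_update_le hα1 hα2 (hV i) (hWt i) hH hH0 (hWH i)

/-- Theorem 1, W-update: the generalized dual KL divergence is non-increasing under the
multiplicative update rule for `W`. -/
theorem dualDivNMF_nonincreasing_W_update (α : ℝ) (hα1 : α ≠ 1) (hα2 : α ≠ 2)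
    (p n k : ℕ) (hp : 1 ≤ p) (hn : 1 ≤ n) (hk : 1 ≤ k)
    (V : Fin p → Fin n → ℝ) (Wt : Fin p → Fin k → ℝ) (H : Fin k → Fin n → ℝ)
    (hV : ∀ i j, 0 < V i j) (hWt : ∀ i a, 0 < Wt i a) (hH : ∀ a j, 0 < H a j) :
    let Wnext : Fin p → Fin k → ℝ := fun i a => Wt i a *
      ((∑ j, (1 / ∑ b, Wt i b * H b j) ^ (α - 1) * H a j) /
        (∑ j, H a j * V i j ^ (1 - α))) ^ (1 / (α - 1))
    dualDivNMF α V Wnext H ≤ dualDivNMF α V Wt H := by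
  have : NeZero n := ⟨Nat.one_le_iff_ne_zero.1 hn⟩
  have : NeZero k := ⟨Nat.one_le_iff_ne_zero.1 hk⟩
  have hH0 (a : Fin k) : H a ≠ 0 := Function.ne_iff.2 ⟨0, (hH a 0).ne'⟩
  have hWH (i : Fin p) (j : Fin n) : 0 < ∑ b, Wt i b * H b j :=
    Finset.sum_pos (fun b _ => mul_pos (hWt i b) (hH b j)) Finset.univ_nonempty
  exact dualDivNMF_nonincreasing_W_update_general hα1 hα2 hV (fun i a => (hWt i a).le)
    (fun a j => (hH a j).le) hH0 hWH
end

section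
/- Let p ≥ 1, fix indices a and j, and let w₁,…,w_p > 0, v₁,…,v_p > 0 and c₁,…,c_p > 0 be real numbers (where c_i = Σ_b W_{ib} H^t_{bj} plays the role of the current reconstruction). Then the limit as α → 1 (over α ≠ 1) of ( Σ_i w_i c_i^{1−α} / Σ_i w_i v_i^{1−α} )^{1/(α−1)} exists and equals exp( Σ_i w_i log(v_i / c_i) / Σ_i w_i ). Consequently, as α → 1 the generalized multiplicative update H^{t+1}_{aj} = H^t_{aj} ( Σ_i (1/c_i)^{α−1} w_i / Σ_i w_i v_i^{1−α} )^{1/(α−1)} converges to the exponential update H^{t+1}_{aj} = H^t_{aj} exp( Σ_i w_i log(v_i/c_i) / Σ_i w_i ). -/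
/-!
Both sums equal `∑ i, w i ≠ 0` at `α = 1`, so the base of the power is a function `f`
differentiable at `1` with `f 1 = 1`. Hence, for `α` near `1`,
`f α ^ (1 / (α - 1)) = exp (log (f α) / (α - 1))`, where the exponent is a difference quotient of
`log ∘ f` and so tends to the derivative of `f` at `1`.
-/

open Filter Topology

theorem tendsto_rpow_one_div_sub_of_hasDerivAt {f : ℝ → ℝ} {f' a : ℝ} (hf : HasDerivAt f f' a)
    (hfa : f a = 1) :
    Tendsto (fun x ↦ f x ^ (1 / (x - a))) (𝓝[≠] a) (𝓝 (Real.exp f')) := by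
  have hlog : HasDerivAt (fun x ↦ Real.log (f x)) f' a := by
    simpa [hfa] using hf.log (by simp [hfa])
  have hpos : ∀ᶠ x in 𝓝[≠] a, 0 < f x :=
    nhdsWithin_le_nhds (hf.continuousAt.eventually_const_lt (by simp [hfa]))
  refine (hlog.tendsto_slope.rexp).congr' ?_
  filter_upwards [hpos] with x hx
  rw [Real.rpow_def_of_pos hx, slope_def_field, hfa, Real.log_one, sub_zero, mul_one_div]

section WeightedPowerSums

variable {ι : Type*} {s : Finset ι} {x y : ι → ℝ}

theorem hasDerivAt_sum_mul_rpow (w : ι → ℝ) (hx : ∀ i ∈ s, 0 < x i) (t : ℝ) :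
    HasDerivAt (fun t : ℝ ↦ ∑ i ∈ s, w i * x i ^ t)
      (∑ i ∈ s, w i * (x i ^ t * Real.log (x i))) t :=
  .fun_sum fun i hi ↦ (Real.hasStrictDerivAt_const_rpow (hx i hi) t).hasDerivAt.const_mul (w i)

theorem hasDerivAt_sum_mul_rpow_div_sum_mul_rpow_zero {w : ι → ℝ}
    (hw : ∑ i ∈ s, w i ≠ 0) (hx : ∀ i ∈ s, 0 < x i) (hy : ∀ i ∈ s, 0 < y i) :
    HasDerivAt (fun t : ℝ ↦ (∑ i ∈ s, w i * x i ^ t) / ∑ i ∈ s, w i * y i ^ t)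
      ((∑ i ∈ s, w i * Real.log (x i / y i)) / ∑ i ∈ s, w i) 0 := by
  have hlog : ∑ i ∈ s, w i * Real.log (x i / y i) =
      ∑ i ∈ s, w i * Real.log (x i) - ∑ i ∈ s, w i * Real.log (y i) := by
    rw [← Finset.sum_sub_distrib]
    refine Finset.sum_congr rfl fun i hi ↦ ?_
    rw [Real.log_div (hx i hi).ne' (hy i hi).ne', mul_sub]
  refine ((hasDerivAt_sum_mul_rpow w hx 0).fun_div (hasDerivAt_sum_mul_rpow w hy 0)
    (by simpa using hw)).congr_deriv ?_
  simp only [Real.rpow_zero, mul_one, one_mul]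
  rw [hlog]
  field_simp

end WeightedPowerSums

theorem update_factor_tendsto_one_general {ι : Type*} (s : Finset ι) (w v c : ι → ℝ)
    (hw : ∑ i ∈ s, w i ≠ 0) (hv : ∀ i ∈ s, 0 < v i) (hc : ∀ i ∈ s, 0 < c i) (h : ℝ) :
    Tendsto
      (fun α : ℝ ↦
        ((∑ i ∈ s, w i * c i ^ (1 - α)) / ∑ i ∈ s, w i * v i ^ (1 - α)) ^ (1 / (α - 1)))
      (𝓝[≠] 1) (𝓝 (Real.exp ((∑ i ∈ s, w i * Real.log (v i / c i)) / ∑ i ∈ s, w i))) ∧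
    Tendsto
      (fun α : ℝ ↦ h *
        ((∑ i ∈ s, (1 / c i) ^ (α - 1) * w i) / ∑ i ∈ s, w i * v i ^ (1 - α)) ^ (1 / (α - 1)))
      (𝓝[≠] 1) (𝓝 (h * Real.exp ((∑ i ∈ s, w i * Real.log (v i / c i)) / ∑ i ∈ s, w i))) := by
  have hderiv : HasDerivAt
      (fun α : ℝ ↦ (∑ i ∈ s, w i * c i ^ (1 - α)) / ∑ i ∈ s, w i * v i ^ (1 - α))
      ((∑ i ∈ s, w i * Real.log (v i / c i)) / ∑ i ∈ s, w i) 1 := by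
    have hzero := hasDerivAt_sum_mul_rpow_div_sum_mul_rpow_zero hw hc hv
    rw [← sub_self (1 : ℝ)] at hzero
    refine (hzero.comp_const_sub 1 1).congr_deriv ?_
    simp only [← neg_div, ← Finset.sum_neg_distrib, ← mul_neg, ← Real.log_inv, inv_div]
  have hfactor := tendsto_rpow_one_div_sub_of_hasDerivAt hderiv (by simp [hw])
  have hnum (α : ℝ) : ∑ i ∈ s, (1 / c i) ^ (α - 1) * w i = ∑ i ∈ s, w i * c i ^ (1 - α) := by
    refine Finset.sum_congr rfl fun i _ ↦ ?_
    rw [one_div, ← Real.rpow_neg_eq_inv_rpow, neg_sub, mul_comm]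
  exact ⟨hfactor, by simpa only [hnum] using hfactor.const_mul h⟩

/-- The l'Hospital-rule limit in Theorem 2: as `α → 1`, the generalized multiplicative
update factor converges to the exponential factor of the Poisson-model update, and
consequently the updated entry `H^{t+1}_{aj}` converges to the exponential update. -/
theorem update_factor_tendsto_one (p : ℕ) (hp : 1 ≤ p) (w v c : Fin p → ℝ)
    (hw : ∀ i, 0 < w i) (hv : ∀ i, 0 < v i) (hc : ∀ i, 0 < c i) (Htaj : ℝ) :
    Filter.Tendsto
      (fun α : ℝ =>
        ((∑ i, w i * c i ^ (1 - α)) / (∑ i, w i * v i ^ (1 - α))) ^ (1 / (α - 1)))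
      (nhdsWithin 1 {(1 : ℝ)}ᶜ)
      (nhds (Real.exp ((∑ i, w i * Real.log (v i / c i)) / (∑ i, w i)))) ∧
    Filter.Tendsto
      (fun α : ℝ => Htaj *
        ((∑ i, (1 / c i) ^ (α - 1) * w i) / (∑ i, w i * v i ^ (1 - α))) ^ (1 / (α - 1)))
      (nhdsWithin 1 {(1 : ℝ)}ᶜ)
      (nhds (Htaj * Real.exp ((∑ i, w i * Real.log (v i / c i)) / (∑ i, w i)))) := by
  have hsum : 0 < ∑ i, w i := Finset.sum_pos (fun i _ ↦ hw i) ⟨⟨0, hp⟩, Finset.mem_univ _⟩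
  exact update_factor_tendsto_one_general _ w v c hsum.ne' (fun i _ ↦ hv i) (fun i _ ↦ hc i) Htaj
end

section
/- (Theorem 2, monotonicity) Let p, n, k ≥ 1 and let V ∈ ℝ^{p×n}, W ∈ ℝ^{p×k}, H^t ∈ ℝ^{k×n} have strictly positive entries. Define H^{t+1}_{aj} = H^t_{aj} · exp( Σ_i W_{ia} log( V_{ij} / Σ_b W_{ib} H^t_{bj} ) / Σ_i W_{ia} ). Then D^d(W H^{t+1} ‖ V) ≤ D^d(W H^t ‖ V), where D^d(WH‖V) = Σ_{i,j} [ (WH)_{ij} log( (WH)_{ij} / V_{ij} ) − (WH)_{ij} + V_{ij} ]; i.e., the dual Kullback–Leibler divergence of the Poisson model is non-increasing under this multiplicative update rule for H. -/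
/-- Dual Kullback–Leibler divergence of the Poisson model `D^d(WH‖V)` between the
reconstruction `WH` and the positive matrix `V`. -/
noncomputable def dualKLPoisson {p n k : ℕ} (V : Fin p → Fin n → ℝ)
    (W : Fin p → Fin k → ℝ) (H : Fin k → Fin n → ℝ) : ℝ :=
  ∑ i, ∑ j,
    ((∑ b, W i b * H b j) * Real.log ((∑ b, W i b * H b j) / V i j)
      - (∑ b, W i b * H b j) + V i j)

/-! This is majorization–minimization. Write `d` for the scalar divergence `x log (x/y) - x + y`,
`S_a = ∑ i, W_ia`, and fix a column `h ↦ h'` of the update, with reconstructions `x ↦ x'`. The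
three-point identity gives
`∑ d(x'_i, v_i) - ∑ d(x_i, v_i) = ∑ d(x'_i, x_i) + ∑ (x'_i - x_i) log (x_i/v_i)`.
By the log-sum inequality the first sum is at most `∑ S_a d(h'_a, h_a)`. The update makes
`log (h'_a/h_a)` equal to minus the `S_a`-normalized gradient, so the second sum is
`-∑ S_a (h'_a - h_a) log (h'_a/h_a) = -∑ S_a (d(h'_a, h_a) + d(h_a, h'_a))`.
Hence each column decreases the objective by at least `∑ S_a d(h_a, h'_a) ≥ 0`. -/

open Finset Real InformationTheory

/-- The scalar generalized Kullback–Leibler divergence, the summand of `dualKLPoisson`. It is the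
usual one for `0 ≤ x` and `0 < y`, and also at `x = y = 0`; at `y = 0 < x`, where the divergence is
infinite, the encoding gives `-x`. -/
noncomputable def generalizedKL (x y : ℝ) : ℝ :=
  x * log (x / y) - x + y

section Scalar

variable {x y z : ℝ}

theorem generalizedKL_eq_mul_klFun (hxy : y = 0 → x = 0) :
    generalizedKL x y = y * klFun (x / y) := by
  rcases eq_or_ne y 0 with hy | hy
  · simp [generalizedKL, hxy hy, hy]
  · rw [generalizedKL, klFun_apply]
    field_simp
    ring

theorem generalizedKL_nonneg (hx : 0 ≤ x) (hy : 0 ≤ y) (hxy : y = 0 → x = 0) :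
    0 ≤ generalizedKL x y := by
  rw [generalizedKL_eq_mul_klFun hxy]
  exact mul_nonneg hy (klFun_nonneg (div_nonneg hx hy))

theorem generalizedKL_mul_mul (c x y : ℝ) :
    generalizedKL (c * x) (c * y) = c * generalizedKL x y := by
  rcases eq_or_ne c 0 with rfl | hc
  · simp [generalizedKL]
  · rw [generalizedKL, generalizedKL, mul_div_mul_left x y hc]
    ring

theorem generalizedKL_three_point (x : ℝ) (hy : y ≠ 0) (hz : z ≠ 0) :
    generalizedKL x z = generalizedKL x y + generalizedKL y z + (x - y) * log (y / z) := by
  rcases eq_or_ne x 0 with rfl | hx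
  · simp only [generalizedKL]
    ring
  · simp only [generalizedKL, log_div hx hy, log_div hx hz, log_div hy hz]
    ring

theorem generalizedKL_mul_exp_add_comm (x t : ℝ) :
    generalizedKL (x * exp t) x + generalizedKL x (x * exp t) = (x * exp t - x) * t := by
  rcases eq_or_ne x 0 with rfl | hx
  · simp [generalizedKL]
  · have hlog : log (x * exp t / x) = t := by rw [mul_div_cancel_left₀ _ hx, log_exp]
    have hlog' : log (x / (x * exp t)) = -t := by rw [← inv_div, log_inv, hlog]
    rw [generalizedKL, generalizedKL, hlog, hlog']
    ring

end Scalar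

theorem generalizedKL_sum_le_sum {ι : Type*} (s : Finset ι) {x y : ι → ℝ}
    (hx : ∀ i ∈ s, 0 ≤ x i) (hy : ∀ i ∈ s, 0 ≤ y i) (hxy : ∀ i ∈ s, y i = 0 → x i = 0) :
    generalizedKL (∑ i ∈ s, x i) (∑ i ∈ s, y i) ≤ ∑ i ∈ s, generalizedKL (x i) (y i) := by
  have hsum : ∑ i ∈ s, y i = 0 → ∑ i ∈ s, x i = 0 := fun h =>
    sum_eq_zero fun i hi => hxy i hi ((sum_eq_zero_iff_of_nonneg hy).1 h i hi)
  rw [generalizedKL_eq_mul_klFun hsum]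
  rcases (sum_nonneg hy).eq_or_lt with hY | hY
  · rw [← hY, zero_mul]
    exact sum_nonneg fun i hi => generalizedKL_nonneg (hx i hi) (hy i hi) (hxy i hi)
  · have hjensen := convexOn_klFun.map_centerMass_le (p := fun i => x i / y i) hy hY
      fun i hi => div_nonneg (hx i hi) (hy i hi)
    have hmean : s.centerMass y (fun i => x i / y i) = (∑ i ∈ s, x i) / ∑ i ∈ s, y i := by
      rw [centerMass, smul_eq_mul, inv_mul_eq_div]
      congr 1
      exact sum_congr rfl fun i hi => mul_div_cancel_of_imp' (hxy i hi)
    rw [hmean, centerMass, smul_eq_mul, inv_mul_eq_div, le_div_iff₀' hY] at hjensen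
    exact hjensen.trans_eq
      (sum_congr rfl fun i hi => (generalizedKL_eq_mul_klFun (hxy i hi)).symm)

section Column

variable {ι κ : Type*} [Fintype ι] [Fintype κ] {v : ι → ℝ} {W : ι → κ → ℝ} {h h' : κ → ℝ}

theorem sum_generalizedKL_linear_le (hW : ∀ i a, 0 ≤ W i a) (hh' : ∀ a, 0 ≤ h' a)
    (hh : ∀ a, 0 ≤ h a) (hac : ∀ a, h a = 0 → h' a = 0) :
    ∑ i, generalizedKL (∑ a, W i a * h' a) (∑ a, W i a * h a) ≤
      ∑ a, (∑ i, W i a) * generalizedKL (h' a) (h a) := by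
  calc ∑ i, generalizedKL (∑ a, W i a * h' a) (∑ a, W i a * h a)
      ≤ ∑ i, ∑ a, generalizedKL (W i a * h' a) (W i a * h a) :=
        sum_le_sum fun i _ => generalizedKL_sum_le_sum univ
          (fun a _ => mul_nonneg (hW i a) (hh' a)) (fun a _ => mul_nonneg (hW i a) (hh a))
          fun a _ ha => mul_eq_zero.2 ((mul_eq_zero.1 ha).imp_right (hac a))
    _ = ∑ a, (∑ i, W i a) * generalizedKL (h' a) (h a) := by
        simp only [generalizedKL_mul_mul, sum_mul]
        exact sum_comm

/-- The logarithm of the factor by which the update rule multiplies the coordinate `h a`, where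
`h` and `v` are corresponding columns of `H` and `V`. -/
noncomputable def logUpdate (v : ι → ℝ) (W : ι → κ → ℝ) (h : κ → ℝ) (a : κ) : ℝ :=
  (∑ i, W i a * log (v i / ∑ b, W i b * h b)) / ∑ i, W i a

theorem sum_sub_mul_log_eq_neg_sum_mul_logUpdate (v : ι → ℝ) (hS : ∀ a, ∑ i, W i a ≠ 0)
    (h h' : κ → ℝ) :
    ∑ i, (∑ a, W i a * h' a - ∑ a, W i a * h a) * log ((∑ a, W i a * h a) / v i) =
      -∑ a, (∑ i, W i a) * ((h' a - h a) * logUpdate v W h a) := by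
  have hgrad (a : κ) : (∑ i, W i a) * logUpdate v W h a =
      -∑ i, W i a * log ((∑ b, W i b * h b) / v i) := by
    rw [logUpdate, mul_div_cancel₀ _ (hS a), ← sum_neg_distrib]
    refine sum_congr rfl fun i _ => ?_
    rw [← inv_div, log_inv, mul_neg]
  simp only [mul_left_comm _ (h' _ - h _), hgrad, mul_neg, sum_neg_distrib, neg_neg,
    ← sum_sub_distrib, mul_sum, sum_mul]
  rw [sum_comm]
  exact sum_congr rfl fun a _ => sum_congr rfl fun i _ => by ring

theorem sum_generalizedKL_logUpdate_add_le (hv : ∀ i, 0 < v i) (hW : ∀ i a, 0 ≤ W i a)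
    (hS : ∀ a, 0 < ∑ i, W i a) (hh : ∀ a, 0 ≤ h a) (hWh : ∀ i, 0 < ∑ a, W i a * h a) :
    ∑ i, generalizedKL (∑ a, W i a * (h a * exp (logUpdate v W h a))) (v i) +
        ∑ a, (∑ i, W i a) * generalizedKL (h a) (h a * exp (logUpdate v W h a)) ≤
      ∑ i, generalizedKL (∑ a, W i a * h a) (v i) := by
  set h' : κ → ℝ := fun a => h a * exp (logUpdate v W h a)
  have hthree : ∑ i, generalizedKL (∑ a, W i a * h' a) (v i) =
      ∑ i, generalizedKL (∑ a, W i a * h' a) (∑ a, W i a * h a) +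
        ∑ i, generalizedKL (∑ a, W i a * h a) (v i) -
        ∑ a, (∑ i, W i a) * ((h' a - h a) * logUpdate v W h a) := by
    rw [sub_eq_add_neg, ← sum_sub_mul_log_eq_neg_sum_mul_logUpdate v (fun a => (hS a).ne') h h',
      ← sum_add_distrib, ← sum_add_distrib]
    exact sum_congr rfl fun i _ => generalizedKL_three_point _ (hWh i).ne' (hv i).ne'
  have hmajor : ∑ i, generalizedKL (∑ a, W i a * h' a) (∑ a, W i a * h a) ≤
      ∑ a, (∑ i, W i a) * generalizedKL (h' a) (h a) :=
    sum_generalizedKL_linear_le hW (fun a => mul_nonneg (hh a) (exp_pos _).le) hh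
      fun a ha => mul_eq_zero_of_left ha _
  have hsymm : ∑ a, (∑ i, W i a) * generalizedKL (h' a) (h a) +
      ∑ a, (∑ i, W i a) * generalizedKL (h a) (h' a) =
      ∑ a, (∑ i, W i a) * ((h' a - h a) * logUpdate v W h a) := by
    simp only [← sum_add_distrib, ← mul_add, h', generalizedKL_mul_exp_add_comm]
  linarith

theorem sum_generalizedKL_logUpdate_le (hv : ∀ i, 0 < v i) (hW : ∀ i a, 0 ≤ W i a)
    (hS : ∀ a, 0 < ∑ i, W i a) (hh : ∀ a, 0 ≤ h a) (hWh : ∀ i, 0 < ∑ a, W i a * h a) :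
    ∑ i, generalizedKL (∑ a, W i a * (h a * exp (logUpdate v W h a))) (v i) ≤
      ∑ i, generalizedKL (∑ a, W i a * h a) (v i) := by
  refine le_of_add_le_of_nonneg_left (sum_generalizedKL_logUpdate_add_le hv hW hS hh hWh)
    (sum_nonneg fun a _ => mul_nonneg (hS a).le ?_)
  exact generalizedKL_nonneg (hh a) (mul_nonneg (hh a) (exp_pos _).le)
    fun ha => (mul_eq_zero.1 ha).resolve_right (exp_ne_zero _)

end Column

theorem dualKLPoisson_eq_sum_generalizedKL {p n k : ℕ} (V : Fin p → Fin n → ℝ)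
    (W : Fin p → Fin k → ℝ) (H : Fin k → Fin n → ℝ) :
    dualKLPoisson V W H = ∑ j, ∑ i, generalizedKL (∑ b, W i b * H b j) (V i j) :=
  sum_comm

theorem dualKLPoisson_nonincreasing_H_update_general {p n k : ℕ}
    (V : Fin p → Fin n → ℝ) (W : Fin p → Fin k → ℝ) (Ht : Fin k → Fin n → ℝ)
    (hV : ∀ i j, 0 < V i j) (hW : ∀ i a, 0 ≤ W i a) (hS : ∀ a, 0 < ∑ i, W i a)
    (hHt : ∀ a j, 0 ≤ Ht a j) (hWHt : ∀ i j, 0 < ∑ b, W i b * Ht b j) :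
    let Hnext : Fin k → Fin n → ℝ := fun a j => Ht a j *
      exp ((∑ i, W i a * log (V i j / ∑ b, W i b * Ht b j)) / (∑ i, W i a))
    dualKLPoisson V W Hnext ≤ dualKLPoisson V W Ht := by
  intro Hnext
  simp only [dualKLPoisson_eq_sum_generalizedKL]
  exact sum_le_sum fun j _ => sum_generalizedKL_logUpdate_le
    (fun i => hV i j) hW hS (fun a => hHt a j) (fun i => hWHt i j)

/-- Theorem 2, monotonicity: the dual KL divergence of the Poisson model is
non-increasing under the exponential multiplicative update rule for `H`. -/
theorem dualKLPoisson_nonincreasing_H_update (p n k : ℕ) (hp : 1 ≤ p) (hn : 1 ≤ n)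
    (hk : 1 ≤ k)
    (V : Fin p → Fin n → ℝ) (W : Fin p → Fin k → ℝ) (Ht : Fin k → Fin n → ℝ)
    (hV : ∀ i j, 0 < V i j) (hW : ∀ i a, 0 < W i a) (hHt : ∀ a j, 0 < Ht a j) :
    let Hnext : Fin k → Fin n → ℝ := fun a j => Ht a j *
      Real.exp ((∑ i, W i a * Real.log (V i j / ∑ b, W i b * Ht b j)) / (∑ i, W i a))
    dualKLPoisson V W Hnext ≤ dualKLPoisson V W Ht :=
  dualKLPoisson_nonincreasing_H_update_general V W Ht hV (fun i a => (hW i a).le)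
    (fun a => sum_pos (fun i _ => hW i a) ⟨⟨0, hp⟩, mem_univ _⟩) (fun a j => (hHt a j).le)
    fun i j => sum_pos (fun b _ => mul_pos (hW i b) (hHt b j)) ⟨⟨0, hk⟩, mem_univ _⟩
end
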